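/- Let f : [0,∞) → [0,∞) be operator monotone with f(1) = 1. Then for every t > 0 at which f has a derivative f′(t), one has f′(t) ≤ max{1, 1/(2t)}. Consequently, for every δ ∈ (0,1) and every t ≥ δ, f′(t) ≤ 1/δ. -/

import Mathlib

/-!
Only `2 × 2` matrices are needed. Comparing `diag(a, b)` with a matrix having a unit vector of
squared coordinates `(1 - q, q)` as eigenvector of eigenvalue `m > (1 - q) a + q b`, and a very
large second eigenvalue, shows that `f` is concave (`concave_ineq`). Comparing `m • u uᵀ`, which is
`≤ diag(a, b)` when `m` is the weighted harmonic mean of `a` and `b`, shows that `y ↦ 1 / f (1 / y)`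
is concave too (`harmonic_ineq`); this is where `0 ≤ f 0` enters.

Letting `q → 0` gives tangent line inequalities at `t`:
* `f b - f t ≤ d (b - t)` for `b ≥ 0` (`tangent_ineq`),
* `d t (1 - t) ≤ f t (1 - f t)` (`harmonic_tangent_ineq`).

For `t < 1/2` the second one and `f t (1 - f t) ≤ 1/4` give `d ≤ 1 / (4 t (1 - t)) ≤ 1 / (2 t)`. For
`t ≥ 1/2`, `t ≠ 1`, the second one and the first one with `b = 1` are incompatible with `d > 1`.
For `t = 1`, the first one with `b = 0` gives `d ≤ 1`.
-/

open scoped ComplexOrder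

/-- `f` is operator monotone on `[0,∞)`: for all positive semidefinite Hermitian
complex matrices (of any size), `A ≤ B` in the Loewner order implies `f(A) ≤ f(B)`,
where `f` is applied via the spectral functional calculus. -/
def OperatorMonotoneOnNonneg (f : ℝ → ℝ) : Prop :=
  ∀ (n : ℕ) (A B : Matrix (Fin n) (Fin n) ℂ), A.PosSemidef → B.PosSemidef →
    (B - A).PosSemidef → (cfc f B - cfc f A).PosSemidef

/-- The real symmetric matrix `[[α, β], [β, γ]]`, with entries viewed in `ℂ`. -/
def symm2 (α β γ : ℝ) : Matrix (Fin 2) (Fin 2) ℂ := !![(α : ℂ), β; β, γ]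

lemma symm2_isHermitian (α β γ : ℝ) : (symm2 α β γ).IsHermitian := by
  ext i j
  fin_cases i <;> fin_cases j <;> simp [symm2]

lemma symm2_sub (α β γ α₂ β₂ γ₂ : ℝ) :
    symm2 α β γ - symm2 α₂ β₂ γ₂ = symm2 (α - α₂) (β - β₂) (γ - γ₂) := by
  ext i j
  fin_cases i <;> fin_cases j <;> simp [symm2]

lemma quad_nonneg {α β γ : ℝ} (hα : 0 ≤ α) (hγ : 0 ≤ γ) (h : β ^ 2 ≤ α * γ) (x y : ℝ) :
    0 ≤ α * x ^ 2 + 2 * β * x * y + γ * y ^ 2 := by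
  rcases hα.eq_or_lt with h0 | h0
  · subst h0
    have : β = 0 := by nlinarith [sq_nonneg β]
    subst this
    nlinarith [mul_nonneg hγ (sq_nonneg y)]
  · have : 0 ≤ α * (α * x ^ 2 + 2 * β * x * y + γ * y ^ 2) := by
      nlinarith [sq_nonneg (α * x + β * y), mul_nonneg (sub_nonneg.2 h) (sq_nonneg y)]
    exact nonneg_of_mul_nonneg_right this h0

lemma symm2_posSemidef {α β γ : ℝ} (hα : 0 ≤ α) (hγ : 0 ≤ γ) (h : β ^ 2 ≤ α * γ) :
    (symm2 α β γ).PosSemidef := by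
  refine Matrix.PosSemidef.of_dotProduct_mulVec_nonneg (symm2_isHermitian α β γ) fun v => ?_
  have h1 := quad_nonneg hα hγ h (v 0).re (v 1).re
  have h2 := quad_nonneg hα hγ h (v 0).im (v 1).im
  rw [Complex.le_def]
  simp [symm2, Matrix.mulVec, dotProduct, Fin.sum_univ_two]
  constructor
  · nlinarith
  · ring

lemma quad_nonneg_of_posSemidef {α β γ : ℝ} (h : (symm2 α β γ).PosSemidef) (x y : ℝ) :
    0 ≤ α * x ^ 2 + 2 * β * x * y + γ * y ^ 2 := by
  have := h.dotProduct_mulVec_nonneg ![(x : ℂ), y]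
  rw [Complex.le_def] at this
  have := this.1
  simp [symm2, Matrix.mulVec, dotProduct, Fin.sum_univ_two] at this
  nlinarith

/-- The symmetric matrix with eigenvalue `x` on `(c, s)` and `y` on `(-s, c)`, assuming
`c ^ 2 + s ^ 2 = 1`. -/
def rot2 (c s x y : ℝ) : Matrix (Fin 2) (Fin 2) ℂ :=
  symm2 (x * c ^ 2 + y * s ^ 2) ((x - y) * (c * s)) (x * s ^ 2 + y * c ^ 2)

lemma rot2_mul {c s : ℝ} (hcs : c ^ 2 + s ^ 2 = 1) (x y x₂ y₂ : ℝ) :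
    rot2 c s x y * rot2 c s x₂ y₂ = rot2 c s (x * x₂) (y * y₂) := by
  have hc : (c : ℂ) ^ 2 = 1 - (s : ℂ) ^ 2 := by
    rw [eq_sub_iff_add_eq]; exact_mod_cast hcs
  have h4 : (c : ℂ) ^ 4 = (1 - (s : ℂ) ^ 2) ^ 2 := by rw [← hc]; ring
  have h3 : (c : ℂ) ^ 3 = c * (1 - (s : ℂ) ^ 2) := by rw [← hc]; ring
  ext i j
  fin_cases i <;> fin_cases j <;>
    simp [rot2, symm2, Matrix.mul_apply, Fin.sum_univ_two] <;> ring_nf <;>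
    simp only [hc, h4, h3] <;> ring

lemma rot2_affine {c s : ℝ} (hcs : c ^ 2 + s ^ 2 = 1) (k l x y : ℝ) :
    rot2 c s (k * x + l) (k * y + l) = k • rot2 c s x y + l • 1 := by
  have hc : (c : ℂ) ^ 2 = 1 - (s : ℂ) ^ 2 := by
    rw [eq_sub_iff_add_eq]; exact_mod_cast hcs
  ext i j
  fin_cases i <;> fin_cases j <;> simp [rot2, symm2, hc] <;> ring

lemma spectrum_rot2 {c s : ℝ} (hcs : c ^ 2 + s ^ 2 = 1) (x y : ℝ) :
    spectrum ℝ (rot2 c s x y) ⊆ {x, y} := by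
  intro z hz
  by_contra hne
  simp only [Set.mem_insert_iff, Set.mem_singleton_iff, not_or] at hne
  apply hz
  have h1 : algebraMap ℝ (Matrix (Fin 2) (Fin 2) ℂ) z - rot2 c s x y =
      rot2 c s (z - x) (z - y) := by
    have := rot2_affine hcs (-1) z x y
    rw [show z - x = -1 * x + z by ring, show z - y = -1 * y + z by ring, this,
      Algebra.algebraMap_eq_smul_one]
    simp [sub_eq_add_neg, add_comm]
  have h2 : rot2 c s 1 1 = 1 := by simpa using rot2_affine hcs 0 1 1 1
  rw [spectrum.mem_resolventSet_iff, h1]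
  refine IsUnit.of_mul_eq_one (rot2 c s (z - x)⁻¹ (z - y)⁻¹) ?_
  rw [rot2_mul hcs, mul_inv_cancel₀ (sub_ne_zero.2 hne.1), mul_inv_cancel₀ (sub_ne_zero.2 hne.2),
    h2]

/-- On the spectrum `{x, y}` every `f` agrees with an affine function, and `rot2 c s` is
compatible with affine functions of the eigenvalues. -/
lemma cfc_rot2 {c s : ℝ} (hcs : c ^ 2 + s ^ 2 = 1) (f : ℝ → ℝ) (x y : ℝ) :
    cfc f (rot2 c s x y) = rot2 c s (f x) (f y) := by
  obtain ⟨k, l, hx, hy⟩ : ∃ k l : ℝ, f x = k * x + l ∧ f y = k * y + l := by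
    by_cases hxy : x = y
    · exact ⟨0, f x, by simp, by simp [hxy]⟩
    · have := sub_ne_zero.2 hxy
      refine ⟨(f x - f y) / (x - y), f x - (f x - f y) / (x - y) * x, by ring, ?_⟩
      field_simp
      ring
  have hsa : IsSelfAdjoint (rot2 c s x y) := symm2_isHermitian _ _ _
  have hEq : (spectrum ℝ (rot2 c s x y)).EqOn f (fun z => k * z + l) := by
    intro z hz
    rcases spectrum_rot2 hcs x y hz with rfl | rfl
    · exact hx
    · exact hy
  rw [cfc_congr hEq, cfc_add_const l (fun z => k * z) _, cfc_const_mul_id k _, hx, hy,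
    rot2_affine hcs, Algebra.algebraMap_eq_smul_one]

lemma rot2_posSemidef {c s x y : ℝ} (hcs : c ^ 2 + s ^ 2 = 1) (hx : 0 ≤ x) (hy : 0 ≤ y) :
    (rot2 c s x y).PosSemidef := by
  refine symm2_posSemidef (by positivity) (by positivity) ?_
  have : (x * c ^ 2 + y * s ^ 2) * (x * s ^ 2 + y * c ^ 2) - ((x - y) * (c * s)) ^ 2
      = x * y * (c ^ 2 + s ^ 2) ^ 2 := by ring
  rw [hcs] at this
  nlinarith [mul_nonneg hx hy]

/-- Concavity of `f`. The strict inequality on `m` replaces continuity of `f`, which is not yet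
known. -/
lemma concave_ineq {f : ℝ → ℝ} (hf : OperatorMonotoneOnNonneg f) {a b q m : ℝ}
    (ha : 0 ≤ a) (hb : 0 ≤ b) (hq0 : 0 < q) (hq1 : q < 1) (hm : (1 - q) * a + q * b < m) :
    (1 - q) * f a + q * f b ≤ f m := by
  obtain ⟨c, s, hc, hs⟩ : ∃ c s : ℝ, c ^ 2 = 1 - q ∧ s ^ 2 = q :=
    ⟨√(1 - q), √q, Real.sq_sqrt (by linarith), Real.sq_sqrt hq0.le⟩
  have hcs : c ^ 2 + s ^ 2 = 1 := by rw [hc, hs]; ring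
  have hm0 : 0 ≤ m := by nlinarith [mul_nonneg (sub_pos.2 hq1).le ha, mul_nonneg hq0.le hb]
  set e := m - ((1 - q) * a + q * b) with he
  have he0 : 0 < e := by linarith
  -- the second eigenvalue of the larger matrix, large enough to make the difference positive
  obtain ⟨N, hN1, hN2, hN3, hN0⟩ : ∃ N : ℝ, a / q ≤ N ∧ b / (1 - q) ≤ N ∧
      m * (q * a + (1 - q) * b) / e ≤ N ∧ 0 ≤ N := by
    refine ⟨max (max (a / q) (b / (1 - q))) (max (m * (q * a + (1 - q) * b) / e) 0), ?_, ?_, ?_, ?_⟩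
      <;> simp
  rw [div_le_iff₀ hq0] at hN1
  rw [div_le_iff₀ (by linarith)] at hN2
  rw [div_le_iff₀ he0] at hN3
  have hdiff : (rot2 c s m N - rot2 1 0 a b).PosSemidef := by
    unfold rot2
    rw [symm2_sub]
    refine symm2_posSemidef ?_ ?_ ?_
    · rw [hc, hs]; nlinarith
    · rw [hc, hs]; nlinarith
    · have : ((m - N) * (c * s) - (a - b) * (1 * 0)) ^ 2 = (m - N) ^ 2 * (c ^ 2 * s ^ 2) := by ring
      rw [this, hc, hs]
      nlinarith [mul_nonneg ha hb]
  have key := hf 2 _ _ (rot2_posSemidef (by norm_num) ha hb) (rot2_posSemidef hcs hm0 hN0) hdiff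
  rw [cfc_rot2 hcs, cfc_rot2 (by norm_num)] at key
  unfold rot2 at key
  rw [symm2_sub] at key
  have := quad_nonneg_of_posSemidef key c s
  have e1 : f m * (c ^ 2 + s ^ 2) ^ 2 - (c ^ 2 * f a + s ^ 2 * f b) =
    (f m * c ^ 2 + f N * s ^ 2 - (f a * 1 ^ 2 + f b * 0 ^ 2)) * c ^ 2 +
      2 * ((f m - f N) * (c * s) - (f a - f b) * (1 * 0)) * c * s +
    (f m * s ^ 2 + f N * c ^ 2 - (f a * 0 ^ 2 + f b * 1 ^ 2)) * s ^ 2 := by ring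
  rw [← e1, hcs, hc, hs] at this
  linarith

/-- The inequality `f(m u uᵀ) ≤ f(diag(a, b))` of quadratic forms, where `u = (√(1 - q), √q)` and
`m` is the weighted harmonic mean of `a` and `b`, evaluated at `(√(1 - q) x, √q y)`. The term
of `f(m u uᵀ)` coming from the eigenvalue `0` is dropped. -/
lemma harmonic_ineq {f : ℝ → ℝ} (hf : OperatorMonotoneOnNonneg f)
    (hnonneg : ∀ x : ℝ, 0 ≤ x → 0 ≤ f x) {a b q m : ℝ}
    (ha : 0 < a) (hb : 0 < b) (hq0 : 0 < q) (hq1 : q < 1)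
    (hm : m * ((1 - q) * b + q * a) = a * b) (x y : ℝ) :
    f m * ((1 - q) * x + q * y) ^ 2 ≤ (1 - q) * (f a * x ^ 2) + q * (f b * y ^ 2) := by
  obtain ⟨c, s, hc, hs⟩ : ∃ c s : ℝ, c ^ 2 = 1 - q ∧ s ^ 2 = q :=
    ⟨√(1 - q), √q, Real.sq_sqrt (by linarith), Real.sq_sqrt hq0.le⟩
  have hcs : c ^ 2 + s ^ 2 = 1 := by rw [hc, hs]; ring
  have hp0 : 0 < 1 - q := by linarith
  have hD : 0 < (1 - q) * b + q * a := by positivity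
  have hm0 : 0 < m := by
    have : 0 < m * ((1 - q) * b + q * a) := by rw [hm]; positivity
    exact pos_of_mul_pos_left this hD.le
  have h1 : m * (1 - q) ≤ a := by
    have : 0 ≤ m * (q * a) := by positivity
    nlinarith
  have h2 : m * q ≤ b := by
    have : 0 ≤ m * ((1 - q) * b) := by positivity
    nlinarith
  have hdiff : (rot2 1 0 a b - rot2 c s m 0).PosSemidef := by
    unfold rot2
    rw [symm2_sub]
    refine symm2_posSemidef ?_ ?_ ?_
    · rw [hc, hs]; nlinarith
    · rw [hc, hs]; nlinarith
    · have : ((a - b) * (1 * 0) - (m - 0) * (c * s)) ^ 2 = m ^ 2 * (c ^ 2 * s ^ 2) := by ring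
      rw [this, hc, hs]
      nlinarith
  have key := hf 2 _ _ (rot2_posSemidef hcs hm0.le le_rfl)
    (rot2_posSemidef (by norm_num) ha.le hb.le) hdiff
  rw [cfc_rot2 hcs, cfc_rot2 (by norm_num)] at key
  unfold rot2 at key
  rw [symm2_sub] at key
  have := quad_nonneg_of_posSemidef key (c * x) (s * y)
  have e1 : c ^ 2 * (f a * x ^ 2) + s ^ 2 * (f b * y ^ 2) - f m * (c ^ 2 * x + s ^ 2 * y) ^ 2
      - f 0 * (c * s) ^ 2 * (x - y) ^ 2 =
    (f a * 1 ^ 2 + f b * 0 ^ 2 - (f m * c ^ 2 + f 0 * s ^ 2)) * (c * x) ^ 2 +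
      2 * ((f a - f b) * (1 * 0) - (f m - f 0) * (c * s)) * (c * x) * (s * y) +
    (f a * 0 ^ 2 + f b * 1 ^ 2 - (f m * s ^ 2 + f 0 * c ^ 2)) * (s * y) ^ 2 := by ring
  have h0 : 0 ≤ f 0 * (c * s) ^ 2 * (x - y) ^ 2 := by
    have := hnonneg 0 le_rfl
    positivity
  rw [← e1] at this
  rw [hc, hs] at this
  linarith

lemma deriv_nonneg_of_nonneg_right {φ : ℝ → ℝ} {D : ℝ} (hφ : HasDerivAt φ D 0) (h0 : φ 0 = 0)
    (hpos : ∀ q : ℝ, 0 < q → q < 1 → 0 ≤ φ q) : 0 ≤ D := by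
  refine ge_of_tendsto hφ.tendsto_slope_zero_right ?_
  filter_upwards [Ioo_mem_nhdsGT (zero_lt_one' ℝ)] with q hq
  have := hpos q hq.1 hq.2
  have hq0 := hq.1
  simp only [zero_add, h0, sub_zero, smul_eq_mul]
  positivity

/-- The tangent at `t` lies above the graph of `f`. The perturbation `q ^ 2` leaves room for the
strict inequality in `concave_ineq` without affecting the derivative at `q = 0`. -/
lemma tangent_ineq {f : ℝ → ℝ} (hf : OperatorMonotoneOnNonneg f) {t d b : ℝ} (ht : 0 < t)
    (hb : 0 ≤ b) (hd : HasDerivAt f d t) : f b - f t ≤ d * (b - t) := by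
  have hg : HasDerivAt (fun q : ℝ => t + q * (b - t) + q ^ 2) (b - t) 0 := by
    have := (((hasDerivAt_id (0 : ℝ)).mul_const (b - t)).const_add t).add
      ((hasDerivAt_id (0 : ℝ)).pow 2)
    exact this.congr_deriv (by simp)
  have hfg : HasDerivAt (fun q : ℝ => f (t + q * (b - t) + q ^ 2)) (d * (b - t)) 0 :=
    HasDerivAt.comp (h₂ := f) 0 (by simpa using hd) hg
  have hφ := (hfg.sub_const (f t)).sub ((hasDerivAt_id (0 : ℝ)).mul_const (f b - f t))
  have := deriv_nonneg_of_nonneg_right hφ (by simp) fun q hq0 hq1 => by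
    have := concave_ineq hf ht.le hb hq0 hq1 (m := t + q * (b - t) + q ^ 2) (by nlinarith)
    simp
    linarith
  linarith

/-- The tangent inequality between `1 / t` and `1` for the concave function `y ↦ 1 / f (1 / y)`,
with denominators cleared. -/
lemma harmonic_tangent_ineq {f : ℝ → ℝ} (hf : OperatorMonotoneOnNonneg f)
    (hnonneg : ∀ x : ℝ, 0 ≤ x → 0 ≤ f x) (h1 : f 1 = 1) {t d : ℝ} (ht : 0 < t)
    (hd : HasDerivAt f d t) : d * (t * (1 - t)) ≤ f t * (1 - f t) := by
  have hg : HasDerivAt (fun q : ℝ => t / (1 + q * (t - 1))) (t * (1 - t)) 0 := by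
    have := (hasDerivAt_const (0 : ℝ) t).div
      (((hasDerivAt_id (0 : ℝ)).mul_const (t - 1)).const_add 1) (by simp)
    exact this.congr_deriv (by simp; ring)
  have hfg : HasDerivAt (fun q : ℝ => f (t / (1 + q * (t - 1)))) (d * (t * (1 - t))) 0 :=
    HasDerivAt.comp (h₂ := f) 0 (by simpa using hd) hg
  have hφ := (hfg.mul (((hasDerivAt_id (0 : ℝ)).mul_const (f t - 1)).const_add 1)).const_sub (f t)
  have := deriv_nonneg_of_nonneg_right hφ (by simp) fun q hq0 hq1 => by
    have hD : 0 < 1 + q * (t - 1) := by nlinarith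
    have hft := hnonneg t ht.le
    have hN : 0 < 1 + q * (f t - 1) := by nlinarith
    -- at `x = f 1 = 1`, `y = f t`, both sides share the factor `1 - q + q * f t`
    have := harmonic_ineq hf hnonneg ht one_pos hq0 hq1 (m := t / (1 + q * (t - 1)))
      (by field_simp; ring) 1 (f t)
    rw [h1] at this
    have h2 : f (t / (1 + q * (t - 1))) * (1 + q * (f t - 1)) * (1 + q * (f t - 1)) ≤
      f t * (1 + q * (f t - 1)) := by nlinarith
    have := le_of_mul_le_mul_right h2 hN
    simp
    linarith
  simp at this
  linarith

/-- If `f : [0,∞) → [0,∞)` is operator monotone with `f(1) = 1`, then wherever `f`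
has a derivative `f'(t)` with `t > 0`, one has `f'(t) ≤ max {1, 1/(2t)}`; in
particular `f'(t) ≤ 1/δ` for every `δ ∈ (0,1)` and `t ≥ δ`. -/
theorem operatorMonotone_deriv_bound
    (f : ℝ → ℝ)
    (hnonneg : ∀ x : ℝ, 0 ≤ x → 0 ≤ f x)
    (hopmono : OperatorMonotoneOnNonneg f)
    (h1 : f 1 = 1)
    (t : ℝ) (ht : 0 < t) (d : ℝ) (hd : HasDerivAt f d t) :
    d ≤ max 1 (1 / (2 * t)) ∧
      ∀ δ : ℝ, 0 < δ → δ < 1 → δ ≤ t → d ≤ 1 / δ := by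
  have hmain : d ≤ max 1 (1 / (2 * t)) := by
    have hT1 := tangent_ineq hopmono ht zero_le_one hd
    have hT0 := tangent_ineq hopmono ht le_rfl hd
    have hH := harmonic_tangent_ineq hopmono hnonneg h1 ht hd
    have hf0 := hnonneg 0 le_rfl
    rw [h1] at hT1
    rcases le_or_gt (1 / 2) t with h | h
    · refine le_max_of_le_left ?_
      by_contra! hd1
      rcases lt_trichotomy t 1 with ht1 | rfl | ht1
      · have hp : 0 < d * (t * (1 - t)) := by
          have : 0 < 1 - t := by linarith
          positivity
        have he : 0 < 1 - f t := by
          have := hnonneg t ht.le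
          by_contra! hc
          nlinarith
        have : t ≤ f t := by
          have : t * (1 - f t) ≤ f t * (1 - f t) := by nlinarith
          exact le_of_mul_le_mul_right this he
        nlinarith [mul_pos (sub_pos.2 hd1) (mul_pos ht (sub_pos.2 ht1)),
          mul_nonneg (sub_nonneg.2 this) (by linarith : 0 ≤ f t + t - 1)]
      · linarith
      · have he : 0 < f t - 1 := by nlinarith
        have : f t ≤ t := by
          have : f t * (f t - 1) ≤ t * (f t - 1) := by nlinarith
          exact le_of_mul_le_mul_right this he
        nlinarith
    · refine le_max_of_le_right ?_
      rw [le_div_iff₀ (by positivity)]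
      by_contra! hc
      nlinarith [sq_nonneg (2 * f t - 1)]
  refine ⟨hmain, fun δ hδ hδ1 hδt => hmain.trans (max_le ?_ ?_)⟩
  · rw [le_div_iff₀ hδ]; linarith
  · exact one_div_le_one_div_of_le hδ (by linarith)
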